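/- arXiv:1712.06268 — 4 statements merged into one kernel-verified Lean document; each statement's English description precedes it below -/
import Mathlib

section
/- Let y₀ ∈ ℝⁿ, t > 0, P ∈ ℝⁿ and x = y₀ + tP. If either (a) Dg(y₀) ≠ 0 and P ≠ Dg(y₀)/|Dg(y₀)|, or (b) Dg(y₀) = 0 and |P| > 1, then y₀ is not a minimizer for (x,t); that is, y₀ ∉ L(x,t). (In other words, points on any ray from y₀ other than the characteristic direction never have y₀ as a minimizer.) -/
open scoped InnerProductSpace Topology ENNReal
open Filter

noncomputable section

/-- Euclidean space `ℝⁿ`. -/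
abbrev Euc (n : ℕ) := EuclideanSpace ℝ (Fin n)

/-- Hopf–Lax solution of the Eikonal equation `uₜ + |∇u| = 0` with initial data `g`:
`u(x,t) = min {g(y) : |y - x| ≤ t}`. -/
def HLu {n : ℕ} (g : Euc n → ℝ) (x : Euc n) (t : ℝ) : ℝ :=
  sInf (g '' Metric.closedBall x t)

/-- The set of minimizers `L(x,t) = {y : |y - x| ≤ t ∧ g y = u(x,t)}`. -/
def HLL {n : ℕ} (g : Euc n → ℝ) (x : Euc n) (t : ℝ) : Set (Euc n) :=
  {y | ‖y - x‖ ≤ t ∧ g y = HLu g x t}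

/-!
If `y` minimizes `g` over the closed ball of radius `r` about `x` and `v = ∇g(y) ≠ 0`, then `y`
also minimizes the linear function `⟪v, ·⟫` over that ball, by the first-order condition on a
convex set. The only minimizer of this linear function is `x - r v / ‖v‖`, so `x` lies on the
characteristic ray issuing from `y`. If `v = 0` and `‖P‖ > 1`, then `y` is outside the ball about
`y + t P` of radius `t`.
-/

section FirstOrderCondition

variable {E : Type*} [NormedAddCommGroup E] [InnerProductSpace ℝ E]

theorem eq_of_norm_le_of_inner_sub_nonneg {a b : E} (hnorm : ‖a‖ ≤ ‖b‖)
    (hinner : 0 ≤ ⟪b, a - b⟫_ℝ) : a = b := by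
  have norm_sq_expansion : ‖a‖ ^ 2 = ‖b‖ ^ 2 + 2 * ⟪b, a - b⟫_ℝ + ‖a - b‖ ^ 2 := by
    simpa only [add_sub_cancel] using norm_add_sq_real b (a - b)
  have norm_sq_le : ‖a‖ ^ 2 ≤ ‖b‖ ^ 2 := by gcongr
  have norm_sub_sq_eq_zero : ‖a - b‖ ^ 2 = 0 :=
    le_antisymm (by linarith) (sq_nonneg _)
  exact sub_eq_zero.1 (norm_eq_zero.1 (pow_eq_zero_iff two_ne_zero |>.1 norm_sub_sq_eq_zero))

theorem self_mem_closedBall_add_smul_iff {y p : E} {t : ℝ} (ht : 0 < t) :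
    y ∈ Metric.closedBall (y + t • p) t ↔ ‖p‖ ≤ 1 := by
  rw [Metric.mem_closedBall, dist_self_add_right, norm_smul, Real.norm_of_nonneg ht.le,
    mul_le_iff_le_one_right ht]

variable [CompleteSpace E] {g : E → ℝ} {v y : E}

theorem inner_gradient_sub_nonneg_of_isMinOn_convex {s : Set E} {z : E} (hs : Convex ℝ s)
    (hmin : IsMinOn g s y) (hg : HasGradientAt g v y) (hy : y ∈ s) (hz : z ∈ s) :
    0 ≤ ⟪v, z - y⟫_ℝ :=
  hmin.localize.hasFDerivWithinAt_nonneg hg.hasFDerivAt.hasFDerivWithinAt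
    (sub_mem_posTangentConeAt_of_segment_subset (hs.segment_subset hy hz))

theorem sub_eq_smul_gradient_of_isMinOn_closedBall {x : E} {r : ℝ}
    (hmin : IsMinOn g (Metric.closedBall x r) y) (hy : y ∈ Metric.closedBall x r)
    (hg : HasGradientAt g v y) (hv : v ≠ 0) :
    x - y = r • ‖v‖⁻¹ • v := by
  have hr : 0 ≤ r := Metric.nonneg_of_mem_closedBall hy
  set b := r • ‖v‖⁻¹ • v with hb
  have norm_b : ‖b‖ = r := by
    rw [hb, norm_smul, norm_smul, norm_inv, norm_norm, inv_mul_cancel₀ (norm_ne_zero_iff.2 hv),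
      mul_one, Real.norm_of_nonneg hr]
  have sub_b_mem : x - b ∈ Metric.closedBall x r := by
    rw [mem_closedBall_iff_norm, sub_sub_cancel_left, norm_neg, norm_b]
  have inner_v_nonneg : 0 ≤ ⟪v, x - b - y⟫_ℝ :=
    inner_gradient_sub_nonneg_of_isMinOn_convex (convex_closedBall x r) hmin hg hy sub_b_mem
  apply eq_of_norm_le_of_inner_sub_nonneg
  · rwa [norm_b, ← mem_closedBall_iff_norm']
  · rw [sub_right_comm, hb, real_inner_smul_left, real_inner_smul_left]
    positivity

theorem noncharacteristic_ray_not_minimizer_general {p : E} {t : ℝ} (ht : 0 < t)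
    (hg : HasGradientAt g v y) (h : (v ≠ 0 ∧ p ≠ ‖v‖⁻¹ • v) ∨ (v = 0 ∧ 1 < ‖p‖)) :
    ¬(y ∈ Metric.closedBall (y + t • p) t ∧ IsMinOn g (Metric.closedBall (y + t • p) t) y) := by
  rintro ⟨hy, hmin⟩
  rcases h with ⟨hv, hp⟩ | ⟨-, hp⟩
  · have hray := sub_eq_smul_gradient_of_isMinOn_closedBall hmin hy hg hv
    rw [add_sub_cancel_left] at hray
    exact hp (smul_right_injective E ht.ne' hray)
  · exact hp.not_ge ((self_mem_closedBall_add_smul_iff ht).1 hy)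

end FirstOrderCondition

theorem mem_HLL_iff_isMinOn {n : ℕ} {g : Euc n → ℝ} {x y : Euc n} {t : ℝ}
    (hg : ContinuousOn g (Metric.closedBall x t)) :
    y ∈ HLL g x t ↔ y ∈ Metric.closedBall x t ∧ IsMinOn g (Metric.closedBall x t) y := by
  have bddBelow : BddBelow (g '' Metric.closedBall x t) :=
    (isCompact_closedBall x t).bddBelow_image hg
  rw [mem_closedBall_iff_norm]
  refine and_congr_right fun hy => ⟨fun hmin z hz => ?_, fun hmin => ?_⟩
  · exact hmin.trans_le (csInf_le bddBelow (Set.mem_image_of_mem g hz))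
  · have isLeast : IsLeast (g '' Metric.closedBall x t) (g y) :=
      ⟨Set.mem_image_of_mem g (mem_closedBall_iff_norm.2 hy), Set.forall_mem_image.2 hmin⟩
    exact isLeast.csInf_eq.symm

theorem noncharacteristic_ray_not_minimizer {n : ℕ} (hn : 0 < n) (g : Euc n → ℝ) (Dg : Euc n → Euc n)
    (hg : ∀ y, HasGradientAt g (Dg y) y) (hDg : Continuous Dg)
    (y₀ P : Euc n) (t : ℝ) (ht : 0 < t)
    (h : (Dg y₀ ≠ 0 ∧ P ≠ ‖Dg y₀‖⁻¹ • Dg y₀) ∨ (Dg y₀ = 0 ∧ 1 < ‖P‖)) :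
    y₀ ∉ HLL g (y₀ + t • P) t := by
  rw [mem_HLL_iff_isMinOn fun y _ => (hg y).continuousAt.continuousWithinAt]
  exact noncharacteristic_ray_not_minimizer_general ht (hg y₀) h
end
end

section
/- Let x₀ ∈ ℝⁿ and t₀ > 0. If L(x₀,t₀) = {y₀} is a singleton, then u is (Fréchet) differentiable at (x₀,t₀) as a function on ℝⁿ × (0,∞), and its derivative is Du(x₀,t₀) = (∇u, u_t)(x₀,t₀) = (Dg(y₀), −|Dg(y₀)|). -/
open scoped InnerProductSpace Topology ENNReal
open Filter

noncomputable section

/-- The continuous linear map `(v,s) ↦ ⟪w, v⟫ + a • s` on `ℝⁿ × ℝ`, representing the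
total derivative with spatial gradient `w` and time derivative `a`. -/
def gradCLM {n : ℕ} (w : Euc n) (a : ℝ) : (Euc n × ℝ) →L[ℝ] ℝ :=
  (innerSL ℝ w).comp (ContinuousLinearMap.fst ℝ (Euc n) ℝ) +
    a • ContinuousLinearMap.snd ℝ (Euc n) ℝ

/-!
Writing `y = x + t • v` turns the moving ball into a fixed one: `u(x,t)` is the minimum of
`g (x + t • v)` over `‖v‖ ≤ 1`. By Danskin's argument, a minimum over a fixed compact set is
differentiable wherever the minimizer `v₀` is unique, and its derivative is that of the minimized
function at fixed `v = v₀`, here `(dx, dt) ↦ Dg(y₀) (dx + dt • v₀)`. Since `y₀` minimizes `g` over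
a ball, it also minimizes the linear functional `Dg(y₀)` over it, so `Dg(y₀) v₀ = -‖Dg(y₀)‖`.
-/

theorem isMinOn_of_forall_ne_lt {α β : Type*} [Preorder β] {f : α → β} {s : Set α} {a : α}
    (h : ∀ x ∈ s, x ≠ a → f a < f x) : IsMinOn f s a := by
  refine isMinOn_iff.2 fun x hx => ?_
  rcases eq_or_ne x a with rfl | hne
  exacts [le_rfl, (h x hx hne).le]

section Danskin

variable {X Y : Type*} [TopologicalSpace Y] {F : X → Y → ℝ} {K : Set Y} {p₀ : X} {v₀ : Y}

theorem eventually_forall_mem_diff_lt_of_unique_minimizer [TopologicalSpace X]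
    (hF : Continuous ↿F) (hK : IsCompact K) (hmin : ∀ v ∈ K, v ≠ v₀ → F p₀ v₀ < F p₀ v)
    {U : Set Y} (hU : U ∈ 𝓝 v₀) :
    ∀ᶠ p in 𝓝 p₀, ∀ v ∈ K \ U, F p v₀ < F p v := by
  obtain ⟨O, hOU, hO, hv₀⟩ := mem_nhds_iff.1 hU
  have h_compact : ∀ᶠ p in 𝓝 p₀, ∀ v ∈ K \ O, F p v₀ < F p v := by
    refine (hK.diff hO).eventually_forall_of_forall_eventually fun v hv => ?_
    have hv_ne : v ≠ v₀ := by rintro rfl; exact hv.2 hv₀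
    have h_left : Continuous fun z : X × Y => F z.1 v₀ :=
      hF.comp (continuous_fst.prodMk continuous_const)
    exact h_left.continuousAt.eventually_lt hF.continuousAt (hmin v hv.1 hv_ne)
  exact h_compact.mono fun p hp v hv => hp v ⟨hv.1, fun hvO => hv.2 (hOU hvO)⟩

theorem hasFDerivAt_sInf_image_of_unique_minimizer [NormedAddCommGroup X] [NormedSpace ℝ X]
    (hF : Continuous ↿F) (hK : IsCompact K) (hv₀ : v₀ ∈ K)
    (hmin : ∀ v ∈ K, v ≠ v₀ → F p₀ v₀ < F p₀ v) {F' : X →L[ℝ] ℝ}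
    (hF' : (fun q : X × Y => F q.1 q.2 - F p₀ q.2 - F' (q.1 - p₀)) =o[𝓝 (p₀, v₀)]
      fun q => q.1 - p₀) :
    HasFDerivAt (fun p => sInf (F p '' K)) F' p₀ := by
  have hFp (p : X) : ContinuousOn (F p) K :=
    (hF.comp (continuous_const.prodMk continuous_id)).continuousOn
  have h_le (p : X) {v : Y} (hv : v ∈ K) : sInf (F p '' K) ≤ F p v :=
    csInf_le (hK.image_of_continuousOn (hFp p)).bddBelow (Set.mem_image_of_mem _ hv)
  have h_value : sInf (F p₀ '' K) = F p₀ v₀ :=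
    IsLeast.csInf_eq ⟨Set.mem_image_of_mem _ hv₀,
      Set.forall_mem_image.2 (isMinOn_iff.1 (isMinOn_of_forall_ne_lt hmin))⟩
  refine .of_isLittleO <| Asymptotics.isLittleO_iff.2 fun ε hε => ?_
  obtain ⟨A, hA, U, hU, h_approx⟩ :=
    mem_nhds_prod_iff.1 (Asymptotics.isLittleO_iff.1 hF' hε)
  filter_upwards [hA, eventually_forall_mem_diff_lt_of_unique_minimizer hF hK hmin hU]
    with p hpA hpU
  obtain ⟨v, hvK, hv, hv_min⟩ := hK.exists_sInf_image_eq_and_le ⟨v₀, hv₀⟩ (hFp p)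
  have hvU : v ∈ U := by
    by_contra hvU
    exact (hpU v ⟨hvK, hvU⟩).not_ge (hv_min v₀ hv₀)
  have h_bound (w : Y) (hw : w ∈ U) : |F p w - F p₀ w - F' (p - p₀)| ≤ ε * ‖p - p₀‖ :=
    h_approx (Set.mk_mem_prod hpA hw)
  have h_upper := (abs_le.1 (h_bound v₀ (mem_of_mem_nhds hU))).2
  have h_lower := (abs_le.1 (h_bound v hvU)).1
  have h_le_p := h_le p hv₀
  have h_le_p₀ := h_le p₀ hvK
  rw [Real.norm_eq_abs, abs_le]
  constructor <;> linarith

end Danskin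

theorem isLittleO_sub_sub_fst_of_hasStrictFDerivAt {X Y Z : Type*}
    [NormedAddCommGroup X] [NormedSpace ℝ X] [NormedAddCommGroup Y] [NormedSpace ℝ Y]
    [NormedAddCommGroup Z] [NormedSpace ℝ Z] {f : X × Y → Z} {f' : X × Y →L[ℝ] Z} {p₀ : X} {v₀ : Y}
    (hf : HasStrictFDerivAt f f' (p₀, v₀)) :
    (fun q : X × Y => f q - f (p₀, q.2) - f' (q.1 - p₀, 0)) =o[𝓝 (p₀, v₀)] fun q => q.1 - p₀ := by
  have h_pair : Tendsto (fun q : X × Y => (q, (p₀, q.2))) (𝓝 (p₀, v₀))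
      (𝓝 ((p₀, v₀), (p₀, v₀))) :=
    Continuous.tendsto (by fun_prop) (p₀, v₀)
  have h_diff (q : X × Y) : q - (p₀, q.2) = (q.1 - p₀, 0) := by ext <;> simp
  have h := hf.isLittleO.comp_tendsto h_pair
  simp only [Function.comp_def, h_diff] at h
  exact h.trans_isBigO <| .of_bound 1 <| .of_forall fun q => by simp

section NormedSpace

variable {E : Type*} [NormedAddCommGroup E] [NormedSpace ℝ E] {g : E → ℝ} {g' : E →L[ℝ] ℝ}
  {x y : E} {r : ℝ}

theorem isMinOn_of_isMinOn_of_hasFDerivWithinAt {s : Set E} (hs : Convex ℝ s) (hy : y ∈ s)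
    (hmin : IsMinOn g s y) (hg : HasFDerivWithinAt g g' s y) : IsMinOn g' s y := by
  intro z hz
  have h := hmin.localize.hasFDerivWithinAt_nonneg hg
    (sub_mem_posTangentConeAt_of_segment_subset (hs.segment_subset hy hz))
  rwa [map_sub, sub_nonneg] at h

theorem apply_sub_eq_of_isMinOn_closedBall (hy : y ∈ Metric.closedBall x r)
    (hmin : IsMinOn g' (Metric.closedBall x r) y) : g' (y - x) = -(r * ‖g'‖) := by
  have hr : 0 ≤ r := Metric.nonempty_closedBall.1 ⟨y, hy⟩
  have h_ball {z : E} (hz : ‖z‖ = 1) : g' (y - x) ≤ r * g' z := by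
    have h : g' y ≤ g' (x + r • z) := hmin <| by simp [norm_smul, hz, abs_of_nonneg hr]
    simp only [map_add, map_smul, smul_eq_mul] at h
    rw [map_sub]
    linarith
  have h_center : g' (y - x) ≤ 0 := by
    have h : g' y ≤ g' x := hmin (Metric.mem_closedBall_self hr)
    rwa [map_sub, sub_nonpos]
  have h_norm : ‖r • g'‖ ≤ -g' (y - x) := by
    refine ContinuousLinearMap.opNorm_le_of_unit_norm (neg_nonneg.2 h_center) fun z hz => ?_
    have h_pos := h_ball hz
    have h_neg := h_ball (z := -z) (by rwa [norm_neg])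
    rw [map_neg] at h_neg
    rw [smul_apply, smul_eq_mul, Real.norm_eq_abs, abs_le]
    constructor <;> linarith
  have h_lower : -g' (y - x) ≤ r * ‖g'‖ :=
    calc -g' (y - x) ≤ ‖g' (y - x)‖ := neg_le_abs _
      _ ≤ ‖g'‖ * r := g'.le_opNorm_of_le (mem_closedBall_iff_norm.1 hy)
      _ = r * ‖g'‖ := mul_comm _ _
  rw [norm_smul, Real.norm_of_nonneg hr] at h_norm
  linarith

theorem image_add_smul_unitClosedBall (hr : 0 ≤ r) (x : E) :
    (fun v : E => x + r • v) '' Metric.closedBall 0 1 = Metric.closedBall x r := by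
  rw [← affinity_unitClosedBall hr x, ← Set.image_smul, ← Set.image_vadd, Set.image_image]
  rfl

theorem isLittleO_comp_add_smul_of_hasStrictFDerivAt {x₀ v₀ : E} {t₀ : ℝ}
    (hg : HasStrictFDerivAt g g' (x₀ + t₀ • v₀)) :
    (fun q : (E × ℝ) × E => g (q.1.1 + q.1.2 • q.2) - g (x₀ + t₀ • q.2) -
      (g'.comp (.fst ℝ E ℝ) + g' v₀ • .snd ℝ E ℝ) (q.1 - (x₀, t₀)))
      =o[𝓝 ((x₀, t₀), v₀)] fun q => q.1 - (x₀, t₀) := by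
  have h_fst : HasStrictFDerivAt (fun q : (E × ℝ) × E => q.1) (.fst ℝ (E × ℝ) E) ((x₀, t₀), v₀) :=
    hasStrictFDerivAt_fst
  have h_snd : HasStrictFDerivAt (fun q : (E × ℝ) × E => q.2) (.snd ℝ (E × ℝ) E) ((x₀, t₀), v₀) :=
    hasStrictFDerivAt_snd
  have h_point := h_fst.fst.add (h_fst.snd.smul h_snd)
  have h := isLittleO_sub_sub_fst_of_hasStrictFDerivAt
    (HasStrictFDerivAt.comp ((x₀, t₀), v₀) hg h_point)
  refine h.congr_left fun q => ?_
  simp [mul_comm]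

theorem differentiable_of_unique_minimizer_general [ProperSpace E] {x₀ y₀ : E} {t₀ : ℝ}
    (hg : Continuous g) (hg' : HasStrictFDerivAt g g' y₀) (ht₀ : 0 < t₀)
    (hy₀ : y₀ ∈ Metric.closedBall x₀ t₀)
    (hmin : ∀ y ∈ Metric.closedBall x₀ t₀, y ≠ y₀ → g y₀ < g y) :
    HasFDerivAt (fun p : E × ℝ => sInf (g '' Metric.closedBall p.1 p.2))
      (g'.comp (.fst ℝ E ℝ) + (-‖g'‖) • .snd ℝ E ℝ) (x₀, t₀) := by
  have h_slope := apply_sub_eq_of_isMinOn_closedBall hy₀ <|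
    isMinOn_of_isMinOn_of_hasFDerivWithinAt (convex_closedBall x₀ t₀) hy₀
      (isMinOn_of_forall_ne_lt hmin) hg'.hasFDerivAt.hasFDerivWithinAt
  have h_image := image_add_smul_unitClosedBall ht₀.le x₀
  obtain ⟨v₀, hv₀, rfl⟩ := h_image.ge hy₀
  have h_slope_v₀ : g' v₀ = -‖g'‖ := by
    rw [add_sub_cancel_left, map_smul, smul_eq_mul, ← mul_neg] at h_slope
    exact mul_left_cancel₀ ht₀.ne' h_slope
  have h_unique (v : E) (hv : v ∈ Metric.closedBall 0 1) (hne : v ≠ v₀) :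
      g (x₀ + t₀ • v₀) < g (x₀ + t₀ • v) :=
    hmin _ (h_image.le (Set.mem_image_of_mem _ hv)) (by simpa [ht₀.ne'] using hne)
  have h_danskin := hasFDerivAt_sInf_image_of_unique_minimizer
    (F := fun (p : E × ℝ) v => g (p.1 + p.2 • v)) (by fun_prop) (isCompact_closedBall 0 1) hv₀
    h_unique (isLittleO_comp_add_smul_of_hasStrictFDerivAt hg')
  rw [h_slope_v₀] at h_danskin
  refine h_danskin.congr_of_eventuallyEq ?_
  filter_upwards [continuousAt_snd.eventually (lt_mem_nhds ht₀)] with p hp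
  rw [← image_add_smul_unitClosedBall hp.le, Set.image_image]

end NormedSpace

theorem hasStrictFDerivAt_of_hasGradientAt_of_continuousAt {E : Type*} [NormedAddCommGroup E]
    [InnerProductSpace ℝ E] [CompleteSpace E] {g : E → ℝ} {Dg : E → E} {y : E}
    (hg : ∀ᶠ z in 𝓝 y, HasGradientAt g (Dg z) z) (hDg : ContinuousAt Dg y) :
    HasStrictFDerivAt g (innerSL ℝ (Dg y)) y :=
  hasStrictFDerivAt_of_hasFDerivAt_of_continuousAt
    (hg.mono fun _ hz => hz.hasFDerivAt) ((innerSL ℝ).continuous.continuousAt.comp hDg)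

theorem HLu_le {n : ℕ} {g : Euc n → ℝ} (hg : Continuous g) {x y : Euc n} {t : ℝ}
    (hy : y ∈ Metric.closedBall x t) : HLu g x t ≤ g y :=
  csInf_le ((isCompact_closedBall x t).image hg).bddBelow (Set.mem_image_of_mem g hy)

theorem mem_closedBall_and_lt_of_HLL_eq_singleton {n : ℕ} {g : Euc n → ℝ} (hg : Continuous g)
    {x₀ y₀ : Euc n} {t₀ : ℝ} (hL : HLL g x₀ t₀ = {y₀}) :
    y₀ ∈ Metric.closedBall x₀ t₀ ∧ ∀ y ∈ Metric.closedBall x₀ t₀, y ≠ y₀ → g y₀ < g y := by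
  obtain ⟨hy₀, h_value⟩ : y₀ ∈ HLL g x₀ t₀ := hL.ge rfl
  refine ⟨mem_closedBall_iff_norm.2 hy₀, fun y hy hne => ?_⟩
  refine h_value.trans_lt <| (HLu_le hg hy).lt_of_ne fun h_eq => hne ?_
  exact hL.le ⟨mem_closedBall_iff_norm.1 hy, h_eq.symm⟩

theorem differentiable_of_unique_minimizer {n : ℕ} (hn : 0 < n) (g : Euc n → ℝ) (Dg : Euc n → Euc n)
    (hg : ∀ y, HasGradientAt g (Dg y) y) (hDg : Continuous Dg)
    (x₀ y₀ : Euc n) (t₀ : ℝ) (ht₀ : 0 < t₀) (hL : HLL g x₀ t₀ = {y₀}) :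
    HasFDerivAt (fun p : Euc n × ℝ => HLu g p.1 p.2)
      (gradCLM (Dg y₀) (-‖Dg y₀‖)) (x₀, t₀) := by
  have hc : Continuous g := continuous_iff_continuousAt.2 fun y => (hg y).continuousAt
  obtain ⟨hy₀, hmin⟩ := mem_closedBall_and_lt_of_HLL_eq_singleton hc hL
  have hstrict : HasStrictFDerivAt g (innerSL ℝ (Dg y₀)) y₀ :=
    hasStrictFDerivAt_of_hasGradientAt_of_continuousAt (.of_forall hg) hDg.continuousAt
  simpa only [HLu, gradCLM, innerSL_apply_norm] using
    differentiable_of_unique_minimizer_general hc hstrict ht₀ hy₀ hmin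
end
end

section
/- Let x₀ ∈ ℝⁿ and t₀ > 0. If Dg(y) = 0 for every y ∈ L(x₀,t₀), then u is (Fréchet) differentiable at (x₀,t₀) and Du(x₀,t₀) = 0 ∈ ℝⁿ⁺¹ (even if L(x₀,t₀) contains more than one point). -/
open scoped InnerProductSpace Topology ENNReal
open Filter

noncomputable section

/-!
Substituting `y = x + t • b` turns `u (x, t)` into a minimum of `g (x + t • b)` over the closed
unit ball, a compact set that does not depend on `(x, t)`. Danskin's envelope argument then applies:
if `F p b` has the same first-order expansion `L` at `p₀`, locally uniformly in `b`, around each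
minimizer `b` of `F p₀`, then `p ↦ min_b F p b` has derivative `L` at `p₀`. Non-minimizers stay
above the minimum by lower semicontinuity, and compactness makes the lower bound uniform in `b`.
Strict differentiability of `g` with derivative `0` at the minimizers gives such an expansion
with `L = 0`.
-/

open Asymptotics Metric

lemma eventually_lt_of_continuousAt_of_lowerSemicontinuousAt {X γ : Type*} [TopologicalSpace X]
    [LinearOrder γ] [DenselyOrdered γ] [TopologicalSpace γ] [OrderTopology γ] {f h : X → γ} {x : X}
    (hf : ContinuousAt f x) (hh : LowerSemicontinuousAt h x) (hlt : f x < h x) :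
    ∀ᶠ z in 𝓝 x, f z < h z := by
  obtain ⟨c, hfc, hch⟩ := exists_between hlt
  filter_upwards [hf.eventually_lt_const hfc, hh c hch] with z hfz hhz using hfz.trans hhz

section Envelope

variable {P β : Type*} [NormedAddCommGroup P] [NormedSpace ℝ P] [TopologicalSpace β]
  {F : P → β → ℝ} {L : P →L[ℝ] ℝ} {p₀ : P}

lemma eventually_forall_le_of_isLittleO [CompactSpace β] {m ε : ℝ} (hε : 0 < ε)
    (hm : ∀ b, m ≤ F p₀ b)
    (hlsc : ∀ b, LowerSemicontinuousAt (fun q : P × β => F q.1 q.2) (p₀, b))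
    (hF : ∀ b, F p₀ b = m →
      (fun q : P × β => F q.1 q.2 - F p₀ q.2 - L (q.1 - p₀)) =o[𝓝 (p₀, b)] fun q => q.1 - p₀) :
    ∀ᶠ p in 𝓝 p₀, ∀ b, m + L (p - p₀) - ε * ‖p - p₀‖ ≤ F p b := by
  suffices h : ∀ b, ∀ᶠ q in 𝓝 (p₀, b), m + L (q.1 - p₀) - ε * ‖q.1 - p₀‖ ≤ F q.1 q.2 by
    simpa only [Set.mem_univ, forall_const] using
      isCompact_univ.eventually_forall_of_forall_eventually (fun b _ => h b)
  intro b
  rcases (hm b).eq_or_lt with hmin | hlt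
  · filter_upwards [(hF b hmin.symm).def hε] with q hq
    linarith [(abs_le.1 hq).1, hm q.2]
  · refine (eventually_lt_of_continuousAt_of_lowerSemicontinuousAt ?_ (hlsc b) ?_).mono
      fun _ => le_of_lt
    · fun_prop
    · simpa using hlt

theorem hasFDerivAt_iInf_of_isLittleO [CompactSpace β] [Nonempty β]
    (hlsc : ∀ b, LowerSemicontinuousAt (fun q : P × β => F q.1 q.2) (p₀, b))
    (hF : ∀ b, (∀ b', F p₀ b ≤ F p₀ b') →
      (fun q : P × β => F q.1 q.2 - F p₀ q.2 - L (q.1 - p₀)) =o[𝓝 (p₀, b)] fun q => q.1 - p₀) :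
    HasFDerivAt (fun p => ⨅ b, F p b) L p₀ := by
  obtain ⟨b₀, hb₀⟩ : ∃ b₀, ∀ b, F p₀ b₀ ≤ F p₀ b := by
    have hlsc₀ : LowerSemicontinuousOn (F p₀) Set.univ := fun b _ =>
      ((hlsc b).comp (g := fun b' => (p₀, b')) (by fun_prop)).lowerSemicontinuousWithinAt _
    obtain ⟨b₀, -, hb₀⟩ := hlsc₀.exists_isMinOn Set.univ_nonempty isCompact_univ
    exact ⟨b₀, fun b => hb₀ (Set.mem_univ b)⟩
  have hmin : ⨅ b, F p₀ b = F p₀ b₀ :=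
    le_antisymm (ciInf_le ⟨_, Set.forall_mem_range.2 hb₀⟩ b₀) (le_ciInf hb₀)
  have hupper : (fun p => F p b₀ - F p₀ b₀ - L (p - p₀)) =o[𝓝 p₀] fun p => p - p₀ :=
    (hF b₀ hb₀).comp_tendsto (k := fun p => (p, b₀)) (Continuous.tendsto (by fun_prop) p₀)
  rw [hasFDerivAt_iff_isLittleO, isLittleO_iff]
  intro ε hε
  have hlower := eventually_forall_le_of_isLittleO (L := L) hε hb₀ hlsc
    fun b hb => hF b fun b' => hb.trans_le (hb₀ b')
  filter_upwards [hlower, hupper.def hε] with p hlow hup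
  have hle : ⨅ b, F p b ≤ F p b₀ := ciInf_le ⟨_, Set.forall_mem_range.2 hlow⟩ b₀
  have hge := le_ciInf hlow
  rw [hmin, Real.norm_eq_abs, abs_le]
  constructor <;> linarith [(abs_le.1 hup).2]

end Envelope

section ClosedBall

variable {E : Type*} [NormedAddCommGroup E] [NormedSpace ℝ E]

lemma image_add_smul_unitClosedBall_s4 (x : E) {t : ℝ} (ht : 0 ≤ t) :
    (fun b => x + t • b) '' closedBall 0 1 = closedBall x t := by
  rw [← affinity_unitClosedBall ht x, ← Set.image_smul, ← Set.image_vadd, Set.image_image]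
  rfl

lemma sInf_image_closedBall_eq_iInf (g : E → ℝ) (x : E) {t : ℝ} (ht : 0 ≤ t) :
    sInf (g '' closedBall x t) = ⨅ b : closedBall (0 : E) 1, g (x + t • (b : E)) := by
  rw [← image_add_smul_unitClosedBall_s4 x ht, Set.image_image, sInf_image']

lemma isBigO_add_smul_sub_add_smul (x₀ b₀ : E) (t₀ : ℝ) :
    (fun q : (E × ℝ) × E => (q.1.1 + q.1.2 • q.2) - (x₀ + t₀ • q.2)) =O[𝓝 ((x₀, t₀), b₀)]
      fun q => q.1 - (x₀, t₀) := by
  have hspace : (fun q : (E × ℝ) × E => q.1.1 - x₀) =O[𝓝 ((x₀, t₀), b₀)]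
      fun q => ‖q.1 - (x₀, t₀)‖ :=
    .of_norm_le fun q => norm_fst_le (q.1 - (x₀, t₀))
  have htime : (fun q : (E × ℝ) × E => q.1.2 - t₀) =O[𝓝 ((x₀, t₀), b₀)]
      fun q => ‖q.1 - (x₀, t₀)‖ :=
    .of_norm_le fun q => norm_snd_le (q.1 - (x₀, t₀))
  have hdir : (fun q : (E × ℝ) × E => q.2) =O[𝓝 ((x₀, t₀), b₀)] fun _ => (1 : ℝ) :=
    continuous_snd.continuousAt.isBigO_one ℝ
  have hsmul : (fun q : (E × ℝ) × E => (q.1.2 - t₀) • q.2) =O[𝓝 ((x₀, t₀), b₀)]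
      fun q => ‖q.1 - (x₀, t₀)‖ := by
    simpa only [smul_eq_mul, mul_one] using htime.smul hdir
  refine (hspace.add hsmul).of_norm_right.congr_left fun q => ?_
  module

lemma isLittleO_comp_add_smul {G : Type*} [NormedAddCommGroup G] [NormedSpace ℝ G]
    {g : E → G} {g' : E →L[ℝ] G} {x₀ b₀ : E} {t₀ : ℝ}
    (hg : HasStrictFDerivAt g g' (x₀ + t₀ • b₀)) :
    (fun q : (E × ℝ) × E => g (q.1.1 + q.1.2 • q.2) - g (x₀ + t₀ • q.2)
        - g' ((q.1.1 + q.1.2 • q.2) - (x₀ + t₀ • q.2)))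
      =o[𝓝 ((x₀, t₀), b₀)] fun q => q.1 - (x₀, t₀) := by
  have hpair : Tendsto (fun q : (E × ℝ) × E => (q.1.1 + q.1.2 • q.2, x₀ + t₀ • q.2))
      (𝓝 ((x₀, t₀), b₀)) (𝓝 (x₀ + t₀ • b₀, x₀ + t₀ • b₀)) :=
    Continuous.tendsto (by fun_prop) ((x₀, t₀), b₀)
  exact (hg.isLittleO.comp_tendsto hpair).trans_isBigO (isBigO_add_smul_sub_add_smul x₀ b₀ t₀)

theorem differentiable_of_all_gradients_zero_general [ProperSpace E] {g : E → ℝ} {x₀ : E} {t₀ : ℝ}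
    (ht₀ : 0 < t₀) (hg : ∀ y ∈ closedBall x₀ t₀, LowerSemicontinuousAt g y)
    (hmin : ∀ y ∈ closedBall x₀ t₀, IsMinOn g (closedBall x₀ t₀) y →
      HasStrictFDerivAt g (0 : E →L[ℝ] ℝ) y) :
    HasFDerivAt (fun p : E × ℝ => sInf (g '' closedBall p.1 p.2))
      (0 : (E × ℝ) →L[ℝ] ℝ) (x₀, t₀) := by
  have : CompactSpace (closedBall (0 : E) 1) :=
    isCompact_iff_compactSpace.1 (isCompact_closedBall 0 1)
  have : Nonempty (closedBall (0 : E) 1) := (nonempty_closedBall.2 zero_le_one).to_subtype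
  have hball := image_add_smul_unitClosedBall_s4 x₀ ht₀.le
  have hmem (b : closedBall (0 : E) 1) : x₀ + t₀ • (b : E) ∈ closedBall x₀ t₀ :=
    hball.subset ⟨b, b.2, rfl⟩
  have hparam : (fun p : E × ℝ => sInf (g '' closedBall p.1 p.2)) =ᶠ[𝓝 (x₀, t₀)]
      fun p => ⨅ b : closedBall (0 : E) 1, g (p.1 + p.2 • (b : E)) := by
    filter_upwards [(continuous_snd.tendsto (x₀, t₀)).eventually_const_lt ht₀] with p hp
    exact sInf_image_closedBall_eq_iInf g p.1 hp.le
  refine HasFDerivAt.congr_of_eventuallyEq (hasFDerivAt_iInf_of_isLittleO (fun b => ?_)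
    fun b hb => ?_) hparam
  · exact (hg _ (hmem b)).comp
      (g := fun q : (E × ℝ) × closedBall (0 : E) 1 => q.1.1 + q.1.2 • (q.2 : E)) (by fun_prop)
  · have hb_min : IsMinOn g (closedBall x₀ t₀) (x₀ + t₀ • (b : E)) := by
      rw [isMinOn_iff, ← hball, Set.forall_mem_image]
      exact fun b' hb' => hb ⟨b', hb'⟩
    have hcoe : Tendsto (fun q : (E × ℝ) × closedBall (0 : E) 1 => (q.1, (q.2 : E)))
        (𝓝 ((x₀, t₀), b)) (𝓝 ((x₀, t₀), (b : E))) := Continuous.tendsto (by fun_prop) _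
    simpa only [Function.comp_def, zero_apply] using
      (isLittleO_comp_add_smul (hmin _ (hmem b) hb_min)).comp_tendsto hcoe

end ClosedBall

lemma mem_HLL_of_isMinOn {n : ℕ} {g : Euc n → ℝ} {x y : Euc n} {t : ℝ}
    (hy : y ∈ closedBall x t) (hmin : IsMinOn g (closedBall x t) y) : y ∈ HLL g x t :=
  ⟨mem_closedBall_iff_norm.1 hy,
    (IsLeast.csInf_eq ⟨Set.mem_image_of_mem g hy, Set.forall_mem_image.2 hmin⟩).symm⟩

lemma hasStrictFDerivAt_of_hasGradientAt {H : Type*} [NormedAddCommGroup H] [InnerProductSpace ℝ H]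
    [CompleteSpace H] {g : H → ℝ} {Dg : H → H} {y : H}
    (hg : ∀ᶠ z in 𝓝 y, HasGradientAt g (Dg z) z) (hDg : ContinuousAt Dg y) :
    HasStrictFDerivAt g (InnerProductSpace.toDual ℝ H (Dg y)) y :=
  hasStrictFDerivAt_of_hasFDerivAt_of_continuousAt (hg.mono fun _ hz => hz.hasFDerivAt)
    ((InnerProductSpace.toDual ℝ H).continuous.continuousAt.comp hDg)

theorem differentiable_of_all_gradients_zero {n : ℕ} (hn : 0 < n) (g : Euc n → ℝ) (Dg : Euc n → Euc n)
    (hg : ∀ y, HasGradientAt g (Dg y) y) (hDg : Continuous Dg)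
    (x₀ : Euc n) (t₀ : ℝ) (ht₀ : 0 < t₀)
    (h0 : ∀ y ∈ HLL g x₀ t₀, Dg y = 0) :
    HasFDerivAt (fun p : Euc n × ℝ => HLu g p.1 p.2)
      (0 : (Euc n × ℝ) →L[ℝ] ℝ) (x₀, t₀) := by
  refine differentiable_of_all_gradients_zero_general ht₀
    (fun y _ => (hg y).continuousAt.lowerSemicontinuousAt) fun y hy hmin => ?_
  simpa only [h0 y (mem_HLL_of_isMinOn hy hmin), map_zero] using
    hasStrictFDerivAt_of_hasGradientAt (y := y) (.of_forall hg) hDg.continuousAt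
end
end

section
/- Suppose u is (Fréchet) differentiable at (x₀,t₀) with t₀ > 0 and ∇u(x₀,t₀) ≠ 0 (the spatial gradient). Then y₁ = x₀ − t₀ · ∇u(x₀,t₀)/|∇u(x₀,t₀)| is the unique minimizer for (x₀,t₀); that is, L(x₀,t₀) = {y₁}. -/
open scoped InnerProductSpace Topology ENNReal
open Filter

noncomputable section

/-!
If `y` minimizes `g` over the closed ball of radius `t₀` about `x₀`, then `y` is a competitor for
`u(x, t₀)` at every `x` in the closed ball of radius `t₀` about `y`, so `u(·, t₀) ≤ g y = u(x₀, t₀)`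
there: `x₀` maximizes `u(·, t₀)` over the ball about `y`. First-order optimality says that `x₀` also
maximizes the linear functional `⟪v, ·⟫` over that ball, where `v = ∇u(x₀, t₀)`. For `v ≠ 0` the
equality case of Cauchy–Schwarz leaves only `x₀ = y + t₀ v / |v|`.
-/

section InnerProductSpace

variable {E : Type*} [NormedAddCommGroup E] [InnerProductSpace ℝ E] {v x y : E} {r : ℝ}

lemma eq_add_smul_of_forall_closedBall_inner_le (hv : v ≠ 0) (hx : x ∈ Metric.closedBall y r)
    (hmax : ∀ z ∈ Metric.closedBall y r, ⟪v, z⟫_ℝ ≤ ⟪v, x⟫_ℝ) :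
    x = y + r • (‖v‖⁻¹ • v) := by
  have hv_pos : 0 < ‖v‖ := norm_pos_iff.2 hv
  have hr : 0 ≤ r := Metric.nonempty_closedBall.1 ⟨x, hx⟩
  have hxy : ‖x - y‖ ≤ r := mem_closedBall_iff_norm.1 hx
  have hunit : ‖‖v‖⁻¹ • v‖ = 1 := norm_smul_inv_norm (𝕜 := ℝ) hv
  have hpole : y + r • (‖v‖⁻¹ • v) ∈ Metric.closedBall y r := by
    rw [mem_closedBall_iff_norm, add_sub_cancel_left, norm_smul, Real.norm_of_nonneg hr,
      hunit, mul_one]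
  have hpole_inner : ⟪v, r • (‖v‖⁻¹ • v)⟫_ℝ = ‖v‖ * r := by
    rw [real_inner_smul_right, real_inner_smul_right, real_inner_self_eq_norm_sq]
    field_simp
  have hle : ‖v‖ * r ≤ ⟪v, x - y⟫_ℝ := by
    have hmax_pole := hmax _ hpole
    rw [inner_add_right, hpole_inner] at hmax_pole
    rw [inner_sub_right]
    linarith
  have hnorm : ‖x - y‖ = r :=
    le_antisymm hxy (le_of_mul_le_mul_left (hle.trans (real_inner_le_norm v _)) hv_pos)
  have hparallel : r • v = ‖v‖ • (x - y) := by
    have hinner : ⟪v, x - y⟫_ℝ = ‖v‖ * ‖x - y‖ :=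
      le_antisymm (real_inner_le_norm v _) (hnorm ▸ hle)
    rw [← inner_eq_norm_mul_iff_real.1 hinner, hnorm]
  rw [smul_comm, hparallel, inv_smul_smul₀ hv_pos.ne', add_sub_cancel]

variable [CompleteSpace E] {u : E → ℝ}

lemma inner_le_inner_of_isLocalMaxOn {s : Set E} (hs : Convex ℝ s) (hx : x ∈ s)
    (hmax : IsLocalMaxOn u s x) (hu : HasGradientWithinAt u v s x) (hy : y ∈ s) :
    ⟪v, y⟫_ℝ ≤ ⟪v, x⟫_ℝ := by
  have hnonpos : ⟪v, y - x⟫_ℝ ≤ 0 :=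
    hmax.hasFDerivWithinAt_nonpos hu.hasFDerivWithinAt
      (sub_mem_posTangentConeAt_of_segment_subset (hs.segment_subset hx hy))
  rwa [inner_sub_right, sub_nonpos] at hnonpos

lemma eq_add_smul_of_isLocalMaxOn_closedBall (hv : v ≠ 0) (hx : x ∈ Metric.closedBall y r)
    (hmax : IsLocalMaxOn u (Metric.closedBall y r) x)
    (hu : HasGradientWithinAt u v (Metric.closedBall y r) x) :
    x = y + r • (‖v‖⁻¹ • v) :=
  eq_add_smul_of_forall_closedBall_inner_le hv hx fun _ hz ↦
    inner_le_inner_of_isLocalMaxOn (convex_closedBall y r) hx hmax hu hz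

end InnerProductSpace

section HopfLax

variable {n : ℕ} {g : Euc n → ℝ} {x y : Euc n} {t : ℝ}

lemma HLu_le_of_mem_closedBall (hg : LowerSemicontinuous g) (hy : y ∈ Metric.closedBall x t) :
    HLu g x t ≤ g y :=
  csInf_le ((hg.lowerSemicontinuousOn _).bddBelow_of_isCompact (isCompact_closedBall x t))
    (Set.mem_image_of_mem g hy)

lemma HLL_nonempty (hg : LowerSemicontinuous g) (ht : 0 ≤ t) : (HLL g x t).Nonempty := by
  obtain ⟨y, hy, hmin⟩ := (hg.lowerSemicontinuousOn _).exists_isMinOn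
    (Metric.nonempty_closedBall.2 ht) (isCompact_closedBall x t)
  have hleast : IsLeast (g '' Metric.closedBall x t) (g y) :=
    ⟨Set.mem_image_of_mem g hy, Set.forall_mem_image.2 hmin⟩
  exact ⟨y, mem_closedBall_iff_norm.1 hy, hleast.csInf_eq.symm⟩

lemma isMaxOn_HLu_closedBall_of_mem_HLL (hg : LowerSemicontinuous g) (hy : y ∈ HLL g x t) :
    IsMaxOn (fun z ↦ HLu g z t) (Metric.closedBall y t) x := fun z hz ↦
  calc HLu g z t ≤ g y := HLu_le_of_mem_closedBall hg (Metric.mem_closedBall_comm.1 hz)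
    _ = HLu g x t := hy.2

lemma eq_sub_smul_of_mem_HLL {v : Euc n} (hg : LowerSemicontinuous g)
    (hv : HasGradientAt (fun z ↦ HLu g z t) v x) (hv0 : v ≠ 0) (hy : y ∈ HLL g x t) :
    y = x - t • (‖v‖⁻¹ • v) :=
  eq_sub_of_add_eq <| Eq.symm <|
    eq_add_smul_of_isLocalMaxOn_closedBall hv0 (mem_closedBall_iff_norm'.2 hy.1)
      (isMaxOn_HLu_closedBall_of_mem_HLL hg hy).localize hv.hasFDerivAt.hasFDerivWithinAt

end HopfLax

theorem unique_minimizer_of_nonzero_gradient_general {n : ℕ} {g : Euc n → ℝ}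
    (hg : LowerSemicontinuous g) {x₀ : Euc n} {t₀ : ℝ} (ht₀ : 0 ≤ t₀) {v : Euc n}
    (hv : HasGradientAt (fun x ↦ HLu g x t₀) v x₀) (hv0 : v ≠ 0) :
    HLL g x₀ t₀ = {x₀ - t₀ • (‖v‖⁻¹ • v)} :=
  Set.eq_singleton_iff_nonempty_unique_mem.2
    ⟨HLL_nonempty hg ht₀, fun _ hy ↦ eq_sub_smul_of_mem_HLL hg hv hv0 hy⟩

theorem unique_minimizer_of_nonzero_gradient {n : ℕ} (hn : 0 < n) (g : Euc n → ℝ) (Dg : Euc n → Euc n)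
    (hg : ∀ y, HasGradientAt g (Dg y) y) (hDg : Continuous Dg)
    (x₀ : Euc n) (t₀ : ℝ) (ht₀ : 0 < t₀) (v : Euc n)
    (hdiff : DifferentiableAt ℝ (fun p : Euc n × ℝ => HLu g p.1 p.2) (x₀, t₀))
    (hv : HasGradientAt (fun x => HLu g x t₀) v x₀) (hv0 : v ≠ 0) :
    HLL g x₀ t₀ = {x₀ - t₀ • (‖v‖⁻¹ • v)} := by
  have hg_cont : Continuous g := continuous_iff_continuousAt.2 fun y ↦ (hg y).continuousAt
  exact unique_minimizer_of_nonzero_gradient_general hg_cont.lowerSemicontinuous ht₀.le hv hv0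
end
end
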